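/- Let n ≥ 2 be an integer and p a real number with 1 < p < ∞. Let Δ_p^n be the supremum, over all full-rank lattices L ⊆ ℝ^n, of the superball packing density V_{n,p}·(d_p(L)/2)^n / covol(L), where d_p(L) is the minimum ℓ_p norm of a nonzero vector of L and covol(L) is the covolume of L. Then Δ_p^n < 1, and for every additive subgroup Λ of ℤ^n whose translates of B_p^n(r) partition ℤ^n (r a real number ≥ 0), the radius satisfies r ≤ (n^{1/p}/2)·(1 + (Δ_p^n)^{1/n}) / (1 − (Δ_p^n)^{1/n}). -/

import Mathlib

open Finset MeasureTheory

/-- The `ℓ_p` distance on `ℤ^n` for a real parameter `p`. -/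
noncomputable def dp (n : ℕ) (p : ℝ) (x y : Fin n → ℤ) : ℝ :=
  (∑ i, (|x i - y i| : ℝ) ^ p) ^ (1 / p)

/-- `V_{n,p}`: the Lebesgue volume of the unit superball in `ℝ^n`. -/
noncomputable def Vnp (n : ℕ) (p : ℝ) : ℝ :=
  (MeasureTheory.volume {x : Fin n → ℝ | ∑ i, |x i| ^ p ≤ 1}).toReal

/-- The set of superball packing densities `V_{n,p}·(d_p(L)/2)^n / covol(L)` over all
full-rank lattices `L ⊆ ℝ^n`, where `d_p(L)` is the minimum `ℓ_p` norm of a nonzero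
vector of `L`. -/
noncomputable def densitySet (n : ℕ) (p : ℝ) : Set ℝ :=
  {δ : ℝ | ∃ (L : Submodule ℤ (Fin n → ℝ)) (_ : DiscreteTopology L) (_ : IsZLattice ℝ L)
      (d : ℝ), IsLeast {e : ℝ | ∃ v ∈ L, v ≠ 0 ∧ e = (∑ i, |v i| ^ p) ^ (1 / p)} d ∧
      δ = Vnp n p * (d / 2) ^ n / ZLattice.covolume L MeasureTheory.volume}

/-!
In a finite-dimensional strictly convex space, let `L` be a lattice with packing radius `ρ`, and
suppose that every point is at distance less than `R` from `L`, with `R` close to `ρ`. If `u` is a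
unit vector, a lattice point `v` near `Ru` has length at least `2ρ`, almost the maximum `2R`, so `v`
is near `2Ru` by uniform convexity. For distinct but close unit vectors `u` and `w`, the difference
of the lattice points near `2Ru` and `2Rw` is then nonzero and too short. Hence some point lies at
distance at least `(1 + η)ρ` from `L`, where `η` depends only on the norm; the ball of radius `ηρ`
around it can be added to the packing, so the density is at most `1 / (1 + η ^ n)`.

Every point of `ℝ^n` is within `m = n^{1/p} / 2` of an integer point. So a linear perfect code of
radius `r` in `ℤ^n` is a lattice with packing radius `r - m` and covering radius `r + m`, and
comparing its covolume with the volumes of these balls gives `r - m ≤ Δ ^ (1 / n) * (r + m)`.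
-/

open scoped ENNReal

section Convexity

variable {E : Type*} [NormedAddCommGroup E] [NormedSpace ℝ E]

theorem norm_inv_two_smul_add_rpow_lt [StrictConvexSpace ℝ E] {p : ℝ} (hp : 1 < p) {x y : E}
    (hxy : x ≠ y) : ‖(2⁻¹ : ℝ) • (x + y)‖ ^ p < (‖x‖ ^ p + ‖y‖ ^ p) / 2 := by
  have : 0 < p := one_pos.trans hp
  rcases eq_or_ne ‖x‖ ‖y‖ with hnorm | hnorm
  · have hmid : ‖(2⁻¹ : ℝ) • (x + y)‖ < ‖x‖ := by
      simpa using (norm_midpoint_lt_iff hnorm).2 hxy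
    calc ‖(2⁻¹ : ℝ) • (x + y)‖ ^ p < ‖x‖ ^ p := by gcongr
      _ = (‖x‖ ^ p + ‖y‖ ^ p) / 2 := by rw [← hnorm, add_self_div_two]
  · calc ‖(2⁻¹ : ℝ) • (x + y)‖ ^ p ≤ (2⁻¹ * ‖x‖ + 2⁻¹ * ‖y‖) ^ p := by
          gcongr
          rw [norm_smul, ← mul_add, Real.norm_of_nonneg (by norm_num)]
          gcongr
          exact norm_add_le x y
      _ < 2⁻¹ * ‖x‖ ^ p + 2⁻¹ * ‖y‖ ^ p :=
          (strictConvexOn_rpow hp).2 (norm_nonneg x) (norm_nonneg y) hnorm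
            (by norm_num) (by norm_num) (by norm_num)
      _ = (‖x‖ ^ p + ‖y‖ ^ p) / 2 := by ring

theorem uniformConvexSpace_of_finiteDimensional [StrictConvexSpace ℝ E] [FiniteDimensional ℝ E] :
    UniformConvexSpace E where
  uniform_convex ε hε := by
    have : ProperSpace E := FiniteDimensional.proper ℝ E
    let K : Set (E × E) := Metric.sphere 0 1 ×ˢ Metric.sphere 0 1 ∩ {z | ε ≤ ‖z.1 - z.2‖}
    have hK : IsCompact K := ((isCompact_sphere 0 1).prod (isCompact_sphere 0 1)).inter_right
      (isClosed_le continuous_const (by fun_prop))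
    have mem_K {x y : E} (hx : ‖x‖ = 1) (hy : ‖y‖ = 1) (hxy : ε ≤ ‖x - y‖) : (x, y) ∈ K :=
      ⟨⟨mem_sphere_zero_iff_norm.2 hx, mem_sphere_zero_iff_norm.2 hy⟩, hxy⟩
    rcases K.eq_empty_or_nonempty with hempty | hne
    · exact ⟨1, one_pos, fun x hx y hy hxy ↦ absurd (mem_K hx hy hxy) (hempty ▸ Set.notMem_empty _)⟩
    obtain ⟨⟨x, y⟩, ⟨⟨hx, hy⟩, hxy⟩, hmax⟩ :=
      hK.exists_isMaxOn hne (f := fun z ↦ ‖z.1 + z.2‖) (by fun_prop)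
    rw [mem_sphere_zero_iff_norm] at hx hy
    have hne : x ≠ y := sub_ne_zero.1 (norm_pos_iff.1 (hε.trans_le hxy))
    have hlt : ‖x + y‖ < 2 := by
      rw [← one_add_one_eq_two]
      nth_rw 1 [← hx, ← hy]
      exact (norm_add_le x y).lt_of_ne
        fun h ↦ hne (eq_of_norm_eq_of_norm_add_eq (hx.trans hy.symm) h)
    refine ⟨2 - ‖x + y‖, sub_pos.2 hlt, fun a ha b hb hab ↦ ?_⟩
    simpa using hmax (mem_K ha hb hab)

variable (E) in
theorem exists_norm_sub_two_smul_lt [UniformConvexSpace E] {ε : ℝ} (hε : 0 < ε) :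
    ∃ δ > 0, ∀ ⦃t v : E⦄, ‖t - v‖ ≤ ‖t‖ → (2 - δ) * ‖t‖ < ‖v‖ →
      ‖v - (2 : ℝ) • t‖ < ε * ‖t‖ := by
  obtain ⟨δ, hδ, h⟩ := exists_forall_closed_ball_dist_add_le_two_sub E hε
  refine ⟨δ, hδ, fun t v hvt hv ↦ ?_⟩
  have ht : 0 < ‖t‖ := by
    refine norm_pos_iff.2 fun ht ↦ ?_
    simp_all
  have norm_rescale (z : E) : ‖‖t‖⁻¹ • z‖ = ‖z‖ / ‖t‖ := by
    rw [norm_smul, norm_inv, norm_norm, inv_mul_eq_div]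
  contrapose! hv
  have hsum := @h (‖t‖⁻¹ • (v - t)) ?_ (‖t‖⁻¹ • t) ?_ ?_
  · rwa [← smul_add, norm_rescale, div_le_iff₀ ht, sub_add_cancel] at hsum
  · rwa [norm_rescale, div_le_one ht, norm_sub_rev]
  · rw [norm_rescale, div_self ht.ne']
  · rwa [← smul_sub, norm_rescale, le_div_iff₀ ht, sub_sub, ← two_smul ℝ]

theorem exists_norm_eq_one_dist_lt (hE : 1 < Module.rank ℝ E) {ε : ℝ} (hε : 0 < ε) :
    ∃ u w : E, ‖u‖ = 1 ∧ ‖w‖ = 1 ∧ u ≠ w ∧ ‖u - w‖ < ε := by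
  have : Nontrivial E := rank_pos_iff_nontrivial.1 (one_pos.trans hE)
  obtain ⟨u, hu⟩ := NormedSpace.sphere_nonempty (E := E) (x := 0) (r := 1) |>.2 one_pos.le
  have hnontrivial : (Metric.sphere (0 : E) 1).Nontrivial :=
    ⟨u, hu, -u, by simpa using hu,
      fun h ↦ ne_neg_of_mem_unit_sphere ℝ ⟨u, hu⟩ (Subtype.ext h)⟩
  have hacc := (isPreconnected_sphere hE 0 1).preperfect_of_nontrivial hnontrivial u hu
  obtain ⟨w, ⟨hwu, hw⟩, hne⟩ := accPt_iff_nhds.1 hacc _ (Metric.ball_mem_nhds u hε)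
  exact ⟨u, w, mem_sphere_zero_iff_norm.1 hu, mem_sphere_zero_iff_norm.1 hw, hne.symm,
    by rwa [← dist_eq_norm']⟩

end Convexity

section StrictConvexity

variable {ι : Type*} [Fintype ι] {p : ℝ≥0∞}

theorem piLp_norm_rpow_eq_sum {α : ι → Type*} [∀ i, NormedAddCommGroup (α i)]
    (hp : 0 < p.toReal) (x : PiLp p α) :
    ‖x‖ ^ p.toReal = ∑ i, ‖x i‖ ^ p.toReal := by
  rw [PiLp.norm_eq_sum hp, one_div, Real.rpow_inv_rpow (by positivity) hp.ne']

theorem strictConvexSpace_piLp {α : ι → Type*} [∀ i, NormedAddCommGroup (α i)]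
    [∀ i, NormedSpace ℝ (α i)] [∀ i, StrictConvexSpace ℝ (α i)] [Fact (1 ≤ p)]
    (hp : 1 < p.toReal) : StrictConvexSpace ℝ (PiLp p α) := by
  have hp0 : 0 < p.toReal := one_pos.trans hp
  refine .of_norm_add_ne_two fun x y hx hy hxy ↦ ?_
  obtain ⟨j, hj⟩ : ∃ j, x j ≠ y j := by
    by_contra! h
    exact hxy (PiLp.ext h)
  intro hsum
  have hnorm : ‖(2⁻¹ : ℝ) • (x + y)‖ = 1 := by simp [norm_smul, hsum, -smul_add]
  refine lt_irrefl (1 : ℝ) ?_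
  calc (1 : ℝ) = ‖(2⁻¹ : ℝ) • (x + y)‖ ^ p.toReal := by rw [hnorm, Real.one_rpow]
    _ = ∑ i, ‖(2⁻¹ : ℝ) • (x i + y i)‖ ^ p.toReal := piLp_norm_rpow_eq_sum hp0 _
    _ < ∑ i, (‖x i‖ ^ p.toReal + ‖y i‖ ^ p.toReal) / 2 := by
      refine sum_lt_sum (fun i _ ↦ ?_) ⟨j, mem_univ j, norm_inv_two_smul_add_rpow_lt hp hj⟩
      rcases eq_or_ne (x i) (y i) with h | h
      · simp [h, ← two_smul ℝ (y i)]
      · exact (norm_inv_two_smul_add_rpow_lt hp h).le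
    _ = (‖x‖ ^ p.toReal + ‖y‖ ^ p.toReal) / 2 := by
      rw [← sum_div, sum_add_distrib, piLp_norm_rpow_eq_sum hp0, piLp_norm_rpow_eq_sum hp0]
    _ = 1 := by rw [hx, hy, Real.one_rpow, add_self_div_two]

end StrictConvexity

theorem ne_and_dist_lt_of_dist_lt_half {α : Type*} [PseudoMetricSpace α] {x y a b : α}
    (ha : dist a x < dist x y / 2) (hb : dist b y < dist x y / 2) :
    a ≠ b ∧ dist a b < 2 * dist x y := by
  refine ⟨?_, by linarith [dist_triangle4_right a b x y]⟩
  rintro rfl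
  linarith [dist_triangle_left x y a]

section Radii

variable {E : Type*} [NormedAddCommGroup E]

/-- `ρ` is a packing radius of the lattice `L` if the open balls of radius `ρ` centred at the points
of `L` are pairwise disjoint, expressed through the lengths of the nonzero vectors of `L`. -/
def IsPackingRadius (L : Submodule ℤ E) (ρ : ℝ) : Prop :=
  ∀ v ∈ L, v ≠ 0 → 2 * ρ ≤ ‖v‖

/-- `R` is a covering radius of `s` if the closed balls of radius `R` centred at the points of `s`
cover the whole space. -/
def IsCoveringRadius (s : Set E) (R : ℝ) : Prop :=
  ∀ x, ∃ v ∈ s, ‖x - v‖ ≤ R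

/-- `v` is a shortest nonzero vector of `L`, so that `‖v‖` is the minimum `d(L)`. -/
def IsMinimalVector (L : Submodule ℤ E) (v : E) : Prop :=
  v ∈ L ∧ v ≠ 0 ∧ ∀ w ∈ L, w ≠ 0 → ‖v‖ ≤ ‖w‖

theorem IsMinimalVector.isPackingRadius {L : Submodule ℤ E} {v : E} (hv : IsMinimalVector L v) :
    IsPackingRadius L (‖v‖ / 2) := by
  simpa [IsPackingRadius, mul_div_cancel₀] using hv.2.2

theorem IsMinimalVector.half_norm_pos {L : Submodule ℤ E} {v : E} (hv : IsMinimalVector L v) :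
    0 < ‖v‖ / 2 :=
  half_pos (norm_pos_iff.2 hv.2.1)

theorem isLeast_norm_iff {L : Submodule ℤ E} {d : ℝ} :
    IsLeast {e | ∃ v ∈ L, v ≠ 0 ∧ e = ‖v‖} d ↔ ∃ v, IsMinimalVector L v ∧ d = ‖v‖ := by
  constructor
  · rintro ⟨⟨v, hvL, hv0, rfl⟩, hmin⟩
    exact ⟨v, ⟨hvL, hv0, fun w hwL hw0 ↦ hmin ⟨w, hwL, hw0, rfl⟩⟩, rfl⟩
  · rintro ⟨v, ⟨hvL, hv0, hmin⟩, rfl⟩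
    refine ⟨⟨v, hvL, hv0, rfl⟩, ?_⟩
    rintro _ ⟨w, hwL, hw0, rfl⟩
    exact hmin w hwL hw0

theorem IsPackingRadius.eq_of_mem_ball {L : Submodule ℤ E} {ρ r : ℝ} (hL : IsPackingRadius L ρ)
    (hr : r ≤ ρ) {x a b : E} (ha : a ∈ Metric.ball x r) (hb : b ∈ Metric.ball x r)
    (hab : a - b ∈ L) : a = b := by
  by_contra hne
  have hle := hL _ hab (sub_ne_zero.2 hne)
  rw [← dist_eq_norm] at hle
  linarith [dist_triangle_right a b x, Metric.mem_ball.1 ha, Metric.mem_ball.1 hb]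

variable [NormedSpace ℝ E]

variable (E) in
theorem exists_ne_zero_norm_le_mul_of_forall_norm_sub_lt [UniformConvexSpace E]
    (hE : 1 < Module.rank ℝ E) :
    ∃ c ∈ Set.Ico (1 : ℝ) 2, ∀ (L : Submodule ℤ E) (R : ℝ), (∀ x, ∃ v ∈ L, ‖x - v‖ < R) →
      ∃ v ∈ L, v ≠ 0 ∧ ‖v‖ ≤ c * R := by
  obtain ⟨u, w, hu, hw, huw, hdist⟩ := exists_norm_eq_one_dist_lt hE (ε := 1 / 4) (by norm_num)
  obtain ⟨δ, hδ, hconvex⟩ := exists_norm_sub_two_smul_lt E (norm_sub_pos_iff.2 huw)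
  refine ⟨max 1 (2 - δ), by simp [hδ], fun L R hcover ↦ ?_⟩
  have hR : 0 < R := (norm_nonneg _).trans_lt (hcover 0).choose_spec.2
  by_contra! hlong
  have exists_near_double {t : E} (ht : ‖t‖ = 1) :
      ∃ v ∈ L, dist v ((2 : ℝ) • R • t) < ‖u - w‖ * R := by
    obtain ⟨v, hvL, hv⟩ := hcover (R • t)
    have hRt : ‖R • t‖ = R := by rw [norm_smul, ht, Real.norm_of_nonneg hR.le, mul_one]
    have hv0 : v ≠ 0 := by
      rintro rfl
      simp [hRt] at hv
    refine ⟨v, hvL, ?_⟩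
    rw [dist_eq_norm]
    refine (hconvex (hv.le.trans_eq hRt.symm) ?_).trans_eq (by rw [hRt])
    calc (2 - δ) * ‖R • t‖ ≤ max 1 (2 - δ) * R := by
          rw [hRt]
          gcongr
          exact le_max_right _ _
      _ < ‖v‖ := hlong v hvL hv0
  have hdouble : dist ((2 : ℝ) • R • u) ((2 : ℝ) • R • w) / 2 = ‖u - w‖ * R := by
    rw [dist_smul₀, dist_smul₀, dist_eq_norm, Real.norm_of_nonneg zero_le_two,
      Real.norm_of_nonneg hR.le, mul_div_cancel_left₀ _ two_ne_zero, mul_comm]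
  obtain ⟨v, hvL, hv⟩ := exists_near_double hu
  obtain ⟨v', hvL', hv'⟩ := exists_near_double hw
  rw [← hdouble] at hv hv'
  obtain ⟨hne, hlt⟩ := ne_and_dist_lt_of_dist_lt_half hv hv'
  refine (hlong _ (L.sub_mem hvL hvL') (sub_ne_zero.2 hne)).not_ge ?_
  calc ‖v - v'‖ = dist v v' := (dist_eq_norm v v').symm
    _ ≤ 4 * ‖u - w‖ * R := by linarith
    _ ≤ max 1 (2 - δ) * R := by
      gcongr
      exact le_max_of_le_left (by linarith)

variable (E) in
theorem exists_forall_isPackingRadius_exists_le_norm_sub [UniformConvexSpace E]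
    (hE : 1 < Module.rank ℝ E) :
    ∃ η ∈ Set.Ioc (0 : ℝ) 1, ∀ (L : Submodule ℤ E) (ρ : ℝ), 0 < ρ → IsPackingRadius L ρ →
      ∃ x, ∀ v ∈ L, ρ + η * ρ ≤ ‖x - v‖ := by
  obtain ⟨c, ⟨hc1, hc2⟩, hshort⟩ := exists_ne_zero_norm_le_mul_of_forall_norm_sub_lt E hE
  refine ⟨1 - c / 2, ⟨by linarith, by linarith⟩, fun L ρ hρ hL ↦ ?_⟩
  by_contra! hcover
  obtain ⟨v, hvL, hv0, hv⟩ := hshort L _ hcover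
  have hcontra : 2 * ρ ≤ (2 - (2 - c) ^ 2 / 2) * ρ := calc
    2 * ρ ≤ ‖v‖ := hL v hvL hv0
    _ ≤ c * (ρ + (1 - c / 2) * ρ) := hv
    _ = (2 - (2 - c) ^ 2 / 2) * ρ := by ring
  nlinarith [pow_pos (sub_pos.2 hc2) 2]

end Radii

section Volume

variable {E : Type*} [NormedAddCommGroup E] [NormedSpace ℝ E] [FiniteDimensional ℝ E]
  [MeasurableSpace E] [BorelSpace E] (μ : Measure E) [μ.IsAddHaarMeasure]

open Metric Module

theorem measureReal_ball_of_pos (x : E) {r : ℝ} (hr : 0 < r) :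
    μ.real (ball x r) = μ.real (ball 0 1) * r ^ finrank ℝ E := by
  simp [measureReal_def, μ.addHaar_ball_of_pos x hr, hr.le, mul_comm]

section Covolume

variable (L : Submodule ℤ E) [DiscreteTopology L] [IsZLattice ℝ L]

theorem measureReal_le_covolume {s : Set E} (hs : MeasurableSet s)
    (hdisj : ∀ x ∈ s, ∀ y ∈ s, x - y ∈ L → x = y) : μ.real s ≤ ZLattice.covolume L μ := by
  have : MeasurableVAdd L E := inferInstanceAs (MeasurableVAdd L.toAddSubgroup E)
  have : VAddInvariantMeasure L E μ := inferInstanceAs (VAddInvariantMeasure L.toAddSubgroup E μ)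
  have hF := ZLattice.isAddFundamentalDomain (Free.chooseBasis ℤ L) μ
  rw [ZLattice.covolume_eq_measure_fundamentalDomain L μ hF]
  refine ENNReal.toReal_mono (ZSpan.fundamentalDomain_isBounded _).measure_lt_top.ne ?_
  by_contra! hlt
  obtain ⟨a, b, hab, h⟩ := exists_pair_mem_lattice_not_disjoint_vadd hF hs.nullMeasurableSet hlt
  obtain ⟨_, ⟨x, hx, rfl⟩, y, hy, hxy : (b : E) + y = a + x⟩ := Set.not_disjoint_iff.1 h
  have hsub : x - y = ((b - a : L) : E) := by
    rw [AddSubgroupClass.coe_sub, sub_eq_sub_iff_add_eq_add, add_comm x, hxy]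
  have heq := hdisj x hx y hy (hsub ▸ (b - a).2)
  rw [heq, sub_self, eq_comm, ZeroMemClass.coe_eq_zero, sub_eq_zero] at hsub
  exact hab hsub.symm

theorem covolume_le_measureReal {s : Set E} (hs : μ s ≠ ⊤) (hcover : ∀ x, ∃ v ∈ L, x - v ∈ s) :
    ZLattice.covolume L μ ≤ μ.real s := by
  have : MeasurableVAdd L E := inferInstanceAs (MeasurableVAdd L.toAddSubgroup E)
  have : VAddInvariantMeasure L E μ := inferInstanceAs (VAddInvariantMeasure L.toAddSubgroup E μ)
  have hF := ZLattice.isAddFundamentalDomain (Free.chooseBasis ℤ L) μ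
  rw [ZLattice.covolume_eq_measure_fundamentalDomain L μ hF]
  refine ENNReal.toReal_mono hs ?_
  rw [hF.measure_eq_tsum s]
  refine (measure_mono fun x hx ↦ ?_).trans (measure_iUnion_le _)
  obtain ⟨v, hv, hxv⟩ := hcover x
  exact Set.mem_iUnion.2 ⟨⟨v, hv⟩, ⟨x - v, hxv, add_sub_cancel v x⟩, hx⟩

variable {L}

theorem IsPackingRadius.measureReal_ball_le_covolume {ρ : ℝ} (hL : IsPackingRadius L ρ) :
    μ.real (ball 0 ρ) ≤ ZLattice.covolume L μ :=
  measureReal_le_covolume μ L measurableSet_ball fun _ ha _ hb ↦ hL.eq_of_mem_ball le_rfl ha hb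

theorem IsPackingRadius.measureReal_ball_add_le_covolume {ρ r : ℝ} (hL : IsPackingRadius L ρ)
    (hr : r ≤ ρ) {x : E} (hx : ∀ v ∈ L, ρ + r ≤ ‖x - v‖) :
    μ.real (ball 0 ρ) + μ.real (ball x r) ≤ ZLattice.covolume L μ := by
  have sub_notMem {a b : E} (ha : a ∈ ball 0 ρ) (hb : b ∈ ball x r) : b - a ∉ L := by
    intro hab
    rw [mem_ball_zero_iff] at ha
    rw [mem_ball_iff_norm'] at hb
    have hle := hx _ hab
    rw [← sub_add] at hle
    linarith [norm_add_le (x - b) a]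
  have hdisj : Disjoint (ball 0 ρ) (ball x r) :=
    Set.disjoint_left.2 fun a ha ha' ↦ sub_notMem ha ha' (sub_self a ▸ L.zero_mem)
  rw [← measureReal_union hdisj measurableSet_ball]
  refine measureReal_le_covolume μ L (measurableSet_ball.union measurableSet_ball) ?_
  rintro a (ha | ha) b (hb | hb) hab
  · exact hL.eq_of_mem_ball le_rfl ha hb hab
  · exact absurd (sub_mem_comm_iff.1 hab) (sub_notMem ha hb)
  · exact absurd hab (sub_notMem hb ha)
  · exact hL.eq_of_mem_ball hr ha hb hab

theorem IsCoveringRadius.covolume_le {R : ℝ} (hL : IsCoveringRadius (L : Set E) R) (hR : 0 ≤ R) :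
    ZLattice.covolume L μ ≤ μ.real (ball 0 1) * R ^ finrank ℝ E := by
  rw [mul_comm, ← μ.addHaar_real_closedBall 0 hR]
  refine covolume_le_measureReal μ L measure_closedBall_lt_top.ne ?_
  simpa [IsCoveringRadius] using hL

end Covolume

/-- The densities `μ(B(0, 1)) · (d(L) / 2) ^ n / covol(L)` of the lattice packings by balls of the
`n`-dimensional normed space `E`, where `L` runs over the full-rank lattices of `E`. -/
def latticePackingDensities : Set ℝ :=
  {δ | ∃ (L : Submodule ℤ E) (_ : DiscreteTopology L) (_ : IsZLattice ℝ L) (v : E),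
    IsMinimalVector L v ∧
      δ = μ.real (ball 0 1) * (‖v‖ / 2) ^ finrank ℝ E / ZLattice.covolume L μ}

variable {μ}

theorem nonneg_of_mem_latticePackingDensities {δ : ℝ} (hδ : δ ∈ latticePackingDensities μ) :
    0 ≤ δ := by
  obtain ⟨L, _, _, v, -, rfl⟩ := hδ
  have := ZLattice.covolume_pos L μ
  positivity

theorem le_one_of_mem_latticePackingDensities {δ : ℝ} (hδ : δ ∈ latticePackingDensities μ) :
    δ ≤ 1 := by
  obtain ⟨L, _, _, v, hv, rfl⟩ := hδ
  rw [div_le_one (ZLattice.covolume_pos L μ), ← measureReal_ball_of_pos μ 0 hv.half_norm_pos]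
  exact hv.isPackingRadius.measureReal_ball_le_covolume μ

theorem bddAbove_latticePackingDensities : BddAbove (latticePackingDensities μ) :=
  ⟨1, fun _ ↦ le_one_of_mem_latticePackingDensities⟩

variable (μ)

theorem sSup_latticePackingDensities_nonneg : 0 ≤ sSup (latticePackingDensities μ) :=
  Real.sSup_nonneg fun _ ↦ nonneg_of_mem_latticePackingDensities

theorem sSup_latticePackingDensities_lt_one [StrictConvexSpace ℝ E]
    (hE : 1 < Module.rank ℝ E) : sSup (latticePackingDensities μ) < 1 := by
  have : UniformConvexSpace E := uniformConvexSpace_of_finiteDimensional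
  obtain ⟨η, ⟨hη0, hη1⟩, hhole⟩ := exists_forall_isPackingRadius_exists_le_norm_sub E hE
  have hηn : 0 < η ^ finrank ℝ E := pow_pos hη0 _
  suffices h : ∀ δ ∈ latticePackingDensities μ, δ ≤ (1 + η ^ finrank ℝ E)⁻¹ from
    (Real.sSup_le h (by positivity)).trans_lt (inv_lt_one_of_one_lt₀ (by linarith))
  rintro _ ⟨L, _, _, v, hv, rfl⟩
  have hρ := hv.half_norm_pos
  obtain ⟨x, hx⟩ := hhole L _ hρ hv.isPackingRadius
  have hpack := hv.isPackingRadius.measureReal_ball_add_le_covolume μ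
    (mul_le_of_le_one_left hρ.le hη1) hx
  rw [measureReal_ball_of_pos μ _ hρ, measureReal_ball_of_pos μ _ (mul_pos hη0 hρ), mul_pow]
    at hpack
  rw [div_le_iff₀ (ZLattice.covolume_pos L μ), inv_mul_eq_div, le_div_iff₀ (by positivity)]
  linarith

end Volume

section CoveringLattice

variable {E : Type*} [NormedAddCommGroup E]

theorem IsCoveringRadius.nonneg {s : Set E} {R : ℝ} (hs : IsCoveringRadius s R) : 0 ≤ R :=
  (norm_nonneg _).trans (hs 0).choose_spec.2

theorem IsPackingRadius.discreteTopology {L : Submodule ℤ E} {ρ : ℝ} (hρ : 0 < ρ)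
    (hL : IsPackingRadius L ρ) : DiscreteTopology L :=
  .of_forall_le_norm (mul_pos two_pos hρ) fun v hv ↦ hL v v.2 (by simpa using hv)

theorem exists_isMinimalVector [ProperSpace E] (L : Submodule ℤ E) [DiscreteTopology L]
    (hL : L ≠ ⊥) : ∃ v, IsMinimalVector L v := by
  obtain ⟨u, huL, hu0⟩ := L.exists_mem_ne_zero_of_ne_bot hL
  have hclosed : IsClosed (L : Set E) :=
    have : DiscreteTopology L.toAddSubgroup := ‹DiscreteTopology L›
    AddSubgroup.isClosed_of_discrete (H := L.toAddSubgroup)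
  have hfinite : (Metric.closedBall 0 ‖u‖ ∩ L : Set E).Finite :=
    Metric.finite_isBounded_inter_isClosed DiscreteTopology.isDiscrete
      Metric.isBounded_closedBall hclosed
  obtain ⟨v, ⟨⟨hvu, hvL⟩, hv0⟩, hmin⟩ := Set.exists_min_image _ norm
    (hfinite.sdiff (t := {0})) ⟨u, by simpa [huL] using hu0⟩
  rw [mem_closedBall_zero_iff] at hvu
  refine ⟨v, hvL, hv0, fun w hwL hw0 ↦ ?_⟩
  rcases le_total ‖w‖ ‖u‖ with hwu | huw
  · exact hmin w ⟨⟨by simpa using hwu, hwL⟩, hw0⟩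
  · exact hvu.trans huw

/-- `L` is a perfect `r`-error-correcting code in `Z`: the closed balls of radius `r` centred at the
points of `L` partition `Z`. -/
def IsPerfectCode (Z L : Set E) (r : ℝ) : Prop :=
  ∀ z ∈ Z, ∃! c, c ∈ L ∧ ‖z - c‖ ≤ r

theorem IsPerfectCode.isCoveringRadius {Z L : Set E} {r m : ℝ} (hL : IsPerfectCode Z L r)
    (hZ : IsCoveringRadius Z m) : IsCoveringRadius L (r + m) := by
  intro x
  obtain ⟨z, hzZ, hz⟩ := hZ x
  obtain ⟨c, ⟨hcL, hc⟩, -⟩ := hL z hzZ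
  exact ⟨c, hcL, by linarith [norm_sub_le_norm_sub_add_norm_sub x z c]⟩

theorem IsPerfectCode.isPackingRadius [NormedSpace ℝ E] {Z : Set E} {L : Submodule ℤ E} {r m : ℝ}
    (hL : IsPerfectCode Z L r) (hZ : IsCoveringRadius Z m) : IsPackingRadius L (r - m) := by
  intro v hvL hv0
  by_contra! hlt
  obtain ⟨z, hzZ, hz⟩ := hZ ((2⁻¹ : ℝ) • v)
  have norm_half : ‖(2⁻¹ : ℝ) • v‖ = ‖v‖ / 2 := by
    rw [norm_smul, Real.norm_of_nonneg (by norm_num), inv_mul_eq_div]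
  rw [norm_sub_rev] at hz
  have hz0 : ‖z - 0‖ ≤ r := by
    have := norm_sub_le_norm_sub_add_norm_sub z ((2⁻¹ : ℝ) • v) 0
    rw [sub_zero ((2⁻¹ : ℝ) • v), norm_half] at this
    linarith
  have hzv : ‖z - v‖ ≤ r := by
    have := norm_sub_le_norm_sub_add_norm_sub z ((2⁻¹ : ℝ) • v) v
    rw [show (2⁻¹ : ℝ) • v - v = -((2⁻¹ : ℝ) • v) by module, norm_neg, norm_half] at this
    linarith
  exact hv0 ((hL z hzZ).unique ⟨hvL, hzv⟩ ⟨L.zero_mem, hz0⟩)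

variable [NormedSpace ℝ E] [FiniteDimensional ℝ E]

theorem IsCoveringRadius.span_eq_top {s : Set E} {R : ℝ} (hs : IsCoveringRadius s R) :
    Submodule.span ℝ s = ⊤ := by
  by_contra hne
  obtain ⟨x, -, hx⟩ := riesz_lemma_of_norm_lt (𝕜 := ℝ) (c := 2) (R := 3) (by norm_num)
    (by norm_num) (Submodule.closed_of_finiteDimensional (Submodule.span ℝ s))
    (by simpa [Submodule.eq_top_iff'] using hne)
  have hR : 0 < R + 1 := by linarith [hs.nonneg]
  obtain ⟨v, hv, hxv⟩ := hs ((R + 1) • x)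
  have hfar := hx ((R + 1)⁻¹ • v) (Submodule.smul_mem _ _ (Submodule.subset_span hv))
  have hscale : ‖(R + 1) • x - v‖ = (R + 1) * ‖x - (R + 1)⁻¹ • v‖ := by
    rw [← Real.norm_of_nonneg hR.le, ← norm_smul, Real.norm_of_nonneg hR.le, smul_sub,
      smul_inv_smul₀ hR.ne']
  nlinarith

section CoveringVolume

variable [MeasurableSpace E] [BorelSpace E] (μ : Measure E) [μ.IsAddHaarMeasure]
  {L : Submodule ℤ E} {R : ℝ}

open Module

theorem IsMinimalVector.half_norm_pow_le [DiscreteTopology L] [IsZLattice ℝ L] {v : E}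
    (hv : IsMinimalVector L v) (hR : IsCoveringRadius (L : Set E) R) :
    (‖v‖ / 2) ^ finrank ℝ E ≤ sSup (latticePackingDensities μ) * R ^ finrank ℝ E := by
  have hV : 0 < μ.real (Metric.ball 0 1) :=
    ENNReal.toReal_pos (Metric.measure_ball_pos μ 0 one_pos).ne' measure_ball_lt_top.ne
  have hdensity := le_csSup (bddAbove_latticePackingDensities (μ := μ)) ⟨L, ‹_›, ‹_›, v, hv, rfl⟩
  rw [div_le_iff₀ (ZLattice.covolume_pos L μ)] at hdensity
  refine le_of_mul_le_mul_left ?_ hV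
  calc μ.real (Metric.ball 0 1) * (‖v‖ / 2) ^ finrank ℝ E
      ≤ sSup (latticePackingDensities μ) * ZLattice.covolume L μ := hdensity
    _ ≤ sSup (latticePackingDensities μ) * (μ.real (Metric.ball 0 1) * R ^ finrank ℝ E) := by
      gcongr
      · exact sSup_latticePackingDensities_nonneg μ
      · exact hR.covolume_le μ hR.nonneg
    _ = μ.real (Metric.ball 0 1) * (sSup (latticePackingDensities μ) * R ^ finrank ℝ E) := by ring

theorem IsPackingRadius.le_mul_of_isCoveringRadius [Nontrivial E] {ρ : ℝ}
    (hρ : IsPackingRadius L ρ) (hR : IsCoveringRadius (L : Set E) R) :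
    ρ ≤ sSup (latticePackingDensities μ) ^ (1 / finrank ℝ E : ℝ) * R := by
  have hD := sSup_latticePackingDensities_nonneg μ
  have hbound : 0 ≤ sSup (latticePackingDensities μ) ^ (1 / finrank ℝ E : ℝ) * R :=
    mul_nonneg (Real.rpow_nonneg hD _) hR.nonneg
  rcases le_or_gt ρ 0 with hρ0 | hρ0
  · exact hρ0.trans hbound
  have := hρ.discreteTopology hρ0
  have : IsZLattice ℝ L := ⟨hR.span_eq_top⟩
  have : ProperSpace E := FiniteDimensional.proper ℝ E
  have hL : L ≠ ⊥ := by
    rintro rfl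
    simpa using hR.span_eq_top
  obtain ⟨v, hv⟩ := exists_isMinimalVector L hL
  have hfinrank : finrank ℝ E ≠ 0 := finrank_pos.ne'
  refine le_of_pow_le_pow_left₀ hfinrank hbound ?_
  calc ρ ^ finrank ℝ E ≤ (‖v‖ / 2) ^ finrank ℝ E := by
        gcongr
        linarith [hρ v hv.1 hv.2.1]
    _ ≤ sSup (latticePackingDensities μ) * R ^ finrank ℝ E := hv.half_norm_pow_le μ hR
    _ = (sSup (latticePackingDensities μ) ^ (1 / finrank ℝ E : ℝ) * R) ^ finrank ℝ E := by
      rw [mul_pow, one_div, Real.rpow_inv_natCast_pow hD hfinrank]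

theorem IsPerfectCode.sub_le_mul_add [Nontrivial E] {Z : Set E} {r m : ℝ}
    (hL : IsPerfectCode Z L r) (hZ : IsCoveringRadius Z m) :
    r - m ≤ sSup (latticePackingDensities μ) ^ (1 / finrank ℝ E : ℝ) * (r + m) :=
  (hL.isPackingRadius hZ).le_mul_of_isCoveringRadius μ (hL.isCoveringRadius hZ)

theorem IsPerfectCode.le_mul_one_add_div_one_sub [StrictConvexSpace ℝ E]
    (hE : 1 < Module.rank ℝ E) {Z : Set E} {r m : ℝ} (hL : IsPerfectCode Z L r)
    (hZ : IsCoveringRadius Z m) :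
    r ≤ m * ((1 + sSup (latticePackingDensities μ) ^ (1 / finrank ℝ E : ℝ)) /
      (1 - sSup (latticePackingDensities μ) ^ (1 / finrank ℝ E : ℝ))) := by
  have : Nontrivial E := rank_pos_iff_nontrivial.1 (one_pos.trans hE)
  have hroot : sSup (latticePackingDensities μ) ^ (1 / finrank ℝ E : ℝ) < 1 :=
    Real.rpow_lt_one (sSup_latticePackingDensities_nonneg μ)
      (sSup_latticePackingDensities_lt_one μ hE)
      (one_div_pos.2 (Nat.cast_pos.2 finrank_pos))
  rw [← mul_div_assoc, le_div_iff₀ (sub_pos.2 hroot)]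
  linarith [hL.sub_le_mul_add μ hZ]

end CoveringVolume

end CoveringLattice

section LpSpace

variable (ι : Type*) [Fintype ι] (p : ℝ≥0∞)

/-- The Lebesgue measure of `ι → ℝ`, regarded as a measure on `ι → ℝ` with the `ℓ_p` norm. -/
noncomputable def lpVolume : Measure (PiLp p fun _ : ι ↦ ℝ) :=
  volume.map (WithLp.toLp p)

theorem measurePreserving_toLp : MeasurePreserving (WithLp.toLp p) volume (lpVolume ι p) :=
  ⟨WithLp.measurable_toLp p _, rfl⟩

theorem measurePreserving_ofLp : MeasurePreserving WithLp.ofLp (lpVolume ι p) volume :=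
  (measurePreserving_toLp ι p).symm (MeasurableEquiv.toLp p (ι → ℝ))

theorem finrank_piLp_real : Module.finrank ℝ (PiLp p fun _ : ι ↦ ℝ) = Fintype.card ι := by
  rw [(WithLp.linearEquiv p ℝ (ι → ℝ)).finrank_eq, Module.finrank_fintype_fun_eq_card]

/-- The inclusion of the integer points `ℤ^ι` into `ℝ^ι` with the `ℓ_p` norm. -/
noncomputable def intCastLp : (ι → ℤ) →+ PiLp p fun _ : ι ↦ ℝ :=
  (WithLp.linearEquiv p ℝ (ι → ℝ)).symm.toAddMonoidHom.comp ((Int.castAddHom ℝ).compLeft ι)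

variable {p} in
theorem dp_eq_norm_intCastLp_sub {n : ℕ} (hp : 0 < p.toReal) (x y : Fin n → ℤ) :
    dp n p.toReal x y = ‖intCastLp (Fin n) p x - intCastLp (Fin n) p y‖ := by
  rw [PiLp.norm_eq_sum hp]
  rfl

variable [Fact (1 ≤ p)]

instance : (lpVolume ι p).IsAddHaarMeasure :=
  (PiLp.continuousLinearEquiv p ℝ fun _ : ι ↦ ℝ).symm.isAddHaarMeasure_map volume

variable {p}

theorem lpVolume_real_ball_eq_Vnp {n : ℕ} (hp : 0 < p.toReal) :
    (lpVolume (Fin n) p).real (Metric.ball 0 1) = Vnp n p.toReal := by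
  have hball : WithLp.toLp p ⁻¹' Metric.closedBall (0 : PiLp p fun _ : Fin n ↦ ℝ) 1 =
      {x : Fin n → ℝ | ∑ i, |x i| ^ p.toReal ≤ 1} := by
    ext x
    rw [Set.mem_preimage, mem_closedBall_zero_iff,
      ← Real.rpow_le_rpow_iff (norm_nonneg _) zero_le_one hp, Real.one_rpow,
      piLp_norm_rpow_eq_sum hp]
    rfl
  rw [measureReal_def, ← Measure.addHaar_unitClosedBall_eq_addHaar_unitBall,
    ← (measurePreserving_toLp (Fin n) p).measure_preimage
      measurableSet_closedBall.nullMeasurableSet, hball, Vnp]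

theorem isLeast_lpNorm_iff {n : ℕ} (hp : 0 < p.toReal) {L : Submodule ℤ (Fin n → ℝ)}
    {M : Submodule ℤ (PiLp p fun _ : Fin n ↦ ℝ)} (hLM : ∀ v, v ∈ M ↔ WithLp.ofLp v ∈ L) {d : ℝ} :
    IsLeast {e | ∃ v ∈ L, v ≠ 0 ∧ e = (∑ i, |v i| ^ p.toReal) ^ (1 / p.toReal)} d ↔
      ∃ v, IsMinimalVector M v ∧ d = ‖v‖ := by
  have hset : {e | ∃ v ∈ L, v ≠ 0 ∧ e = (∑ i, |v i| ^ p.toReal) ^ (1 / p.toReal)} =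
      {e | ∃ v ∈ M, v ≠ 0 ∧ e = ‖v‖} := by
    ext e
    exact (WithLp.equiv p (Fin n → ℝ)).symm.exists_congr fun v ↦ by
      simp [hLM, PiLp.norm_eq_sum hp]
  rw [hset, isLeast_norm_iff]

theorem densitySet_eq_latticePackingDensities {n : ℕ} (hp : 0 < p.toReal) :
    densitySet n p.toReal = latticePackingDensities (lpVolume (Fin n) p) := by
  let e := PiLp.continuousLinearEquiv p ℝ fun _ : Fin n ↦ ℝ
  ext δ
  constructor
  · rintro ⟨L, _, _, d, hd, rfl⟩
    obtain ⟨v, hv, rfl⟩ := (isLeast_lpNorm_iff hp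
      (M := ZLattice.comap ℝ L e.toLinearMap) fun _ ↦ Iff.rfl).1 hd
    refine ⟨_, inferInstance, inferInstance, v, hv, ?_⟩
    rw [finrank_piLp_real, Fintype.card_fin, lpVolume_real_ball_eq_Vnp hp,
      ZLattice.covolume_comap L volume (lpVolume (Fin n) p) (measurePreserving_ofLp (Fin n) p)]
  · rintro ⟨M, _, _, v, hv, rfl⟩
    refine ⟨ZLattice.comap ℝ M e.symm.toLinearMap, inferInstance, inferInstance, ‖v‖,
      (isLeast_lpNorm_iff hp fun _ ↦ Iff.rfl).2 ⟨v, hv, rfl⟩, ?_⟩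
    rw [finrank_piLp_real, Fintype.card_fin, lpVolume_real_ball_eq_Vnp hp,
      ZLattice.covolume_comap M (lpVolume (Fin n) p) volume (measurePreserving_toLp (Fin n) p)]

variable (p) in
theorem isCoveringRadius_range_intCastLp :
    IsCoveringRadius (Set.range (intCastLp ι p)) ((Fintype.card ι : ℝ) ^ (1 / p.toReal) / 2) := by
  intro x
  refine ⟨_, ⟨fun i ↦ round (x i), rfl⟩, ?_⟩
  set y : ι → ℝ := fun i ↦ x i - round (x i)
  have hround : ‖y‖ ≤ 1 / 2 :=
    (pi_norm_le_iff_of_nonneg (by norm_num)).2 fun i ↦ abs_sub_round (x i)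
  calc ‖x - intCastLp ι p fun i ↦ round (x i)‖ = ‖WithLp.toLp p y‖ := rfl
    _ ≤ (Fintype.card ι : ℝ) ^ (1 / p.toReal) * ‖y‖ := by
      simpa using (PiLp.lipschitzWith_toLp p fun _ : ι ↦ ℝ).norm_le_mul rfl y
    _ ≤ (Fintype.card ι : ℝ) ^ (1 / p.toReal) / 2 := by
      rw [div_eq_mul_one_div (_ ^ _)]
      gcongr

theorem isPerfectCode_range_intCastLp {n : ℕ} (hp : 0 < p.toReal) {Λ : AddSubgroup (Fin n → ℤ)}
    {r : ℝ} (hΛ : ∀ z, ∃! c, c ∈ Λ ∧ dp n p.toReal z c ≤ r) :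
    IsPerfectCode (Set.range (intCastLp (Fin n) p))
      (Λ.map (intCastLp (Fin n) p)).toIntSubmodule r := by
  rintro _ ⟨z, rfl⟩
  obtain ⟨c, ⟨hcΛ, hc⟩, hunique⟩ := hΛ z
  rw [dp_eq_norm_intCastLp_sub hp] at hc
  refine ⟨_, ⟨⟨c, hcΛ, rfl⟩, hc⟩, ?_⟩
  rintro _ ⟨⟨c', hcΛ', rfl⟩, hc'⟩
  rw [← dp_eq_norm_intCastLp_sub hp] at hc'
  rw [hunique c' ⟨hcΛ', hc'⟩]

end LpSpace

/-- The optimal superball packing density `Δ_p^n` satisfies `Δ_p^n < 1`, and the radius of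
any linear `r`-perfect code in `ℤ^n` in the `ℓ_p` metric (for `1 < p < ∞`, `n ≥ 2`)
satisfies `r ≤ (n^{1/p}/2)·(1 + (Δ_p^n)^{1/n})/(1 − (Δ_p^n)^{1/n})`. -/
theorem perfect_code_radius_bound (n : ℕ) (hn : 2 ≤ n) (p : ℝ) (hp : 1 < p) :
    sSup (densitySet n p) < 1 ∧
    ∀ (Λ : AddSubgroup (Fin n → ℤ)) (r : ℝ), 0 ≤ r →
      (∀ z : Fin n → ℤ, ∃! c, c ∈ Λ ∧ dp n p z c ≤ r) →
      r ≤ (n : ℝ) ^ (1 / p) / 2 *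
        ((1 + sSup (densitySet n p) ^ ((1 : ℝ) / n)) /
          (1 - sSup (densitySet n p) ^ ((1 : ℝ) / n))) := by
  obtain ⟨q, rfl⟩ : ∃ q : ℝ≥0∞, q.toReal = p :=
    ⟨ENNReal.ofReal p, ENNReal.toReal_ofReal (by linarith)⟩
  have hq : 0 < q.toReal := by linarith
  have : Fact (1 ≤ q) := ⟨(ENNReal.ofReal_one ▸ ENNReal.ofReal_lt_iff_lt_toReal
    zero_le_one (ENNReal.toReal_pos_iff.1 hq).2.ne |>.2 hp).le⟩
  have := strictConvexSpace_piLp (α := fun _ : Fin n ↦ ℝ) hp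
  have hfinrank : Module.finrank ℝ (PiLp q fun _ : Fin n ↦ ℝ) = n := by
    rw [finrank_piLp_real, Fintype.card_fin]
  have hrank : 1 < Module.rank ℝ (PiLp q fun _ : Fin n ↦ ℝ) :=
    Module.one_lt_rank_of_one_lt_finrank (by omega)
  rw [densitySet_eq_latticePackingDensities hq]
  refine ⟨sSup_latticePackingDensities_lt_one (lpVolume (Fin n) q) hrank, fun Λ r _ hΛ ↦ ?_⟩
  simpa only [hfinrank, Fintype.card_fin] using
    (isPerfectCode_range_intCastLp hq hΛ).le_mul_one_add_div_one_sub (lpVolume (Fin n) q) hrank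
      (isCoveringRadius_range_intCastLp (Fin n) q)
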